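/- Let Γ₁, Γ₂ ⊆ ℕ^r be affine semigroups whose join Γ = Γ₁ ⊔ Γ₂ is defined. Then for each i, the multiset of i-Betti Γ-degrees of Γ satisfies ℬᵢ(Γ) = ⋃_{p₁+p₂=i} ( ℬ_{p₁}(Γ₁) + ℬ_{p₂}(Γ₂) ), where ℬ_{p₁}(Γ₁) + ℬ_{p₂}(Γ₂) denotes the multiset of sums of a p₁-Betti Γ₁-degree and a p₂-Betti Γ₂-degree (with the conventions ℬ₀ = {0} and ℬ_p = ∅ for p > pd). -/

import Mathlib

/-!
By the comparison theorem, two minimal graded free resolutions of the same quotient have the same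
multiset of degrees: comparison maps compose to an endomorphism homotopic to the identity, and
minimality turns this into the identity modulo the graded maximal ideal. So it suffices that the
tensor product of the given resolutions of `K[Γ₁]` and `K[Γ₂]` is a minimal resolution of
`K[Γ₁ ⊔ Γ₂]`. It is exact because tensor products over `K` are flat, so that the first resolution
stays exact modulo the ideal of the second one; and the ideal it resolves is the toric ideal of the
join because linear independence of the rays makes `K[Γ₁]` and `K[Γ₂]` linearly disjoint.

A finite complex of free modules is handled as one square matrix `D` acting on the direct sum of
its terms. Chain maps, homotopies and the exactness of tensor products are then all instances of
solving one matrix equation, `D * X = X * E + Z`, column by column along the homological degree.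
-/

open MvPolynomial

noncomputable section

set_option synthInstance.maxHeartbeats 1000000
set_option maxHeartbeats 1000000

/-- The affine semigroup of `ℕ^d` generated by `a₁,…,a_n`. -/
def affSemigroup {n d : ℕ} (a : Fin n → Fin d → ℕ) : AddSubmonoid (Fin d → ℕ) :=
  AddSubmonoid.closure (Set.range a)

/-- `v` lies in the rational polyhedral cone generated by `a₁,…,a_n`. -/
def inCone {n d : ℕ} (a : Fin n → Fin d → ℕ) (v : Fin d → ℕ) : Prop :=
  ∃ c : Fin n → ℚ, (∀ i, 0 ≤ c i) ∧ ∀ j, (v j : ℚ) = ∑ i, c i * (a i j : ℚ)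

/-- `ℋ(Γ) = (Cone(Γ) \ Γ) ∩ ℕ^d`, the set of holes of the affine semigroup. -/
def holes {n d : ℕ} (a : Fin n → Fin d → ℕ) : Set (Fin d → ℕ) :=
  {v | inCone a v ∧ v ∉ affSemigroup a}

/-- The pseudo-Frobenius elements of the affine semigroup generated by `a`. -/
def pseudoFrobenius {n d : ℕ} (a : Fin n → Fin d → ℕ) : Set (Fin d → ℕ) :=
  {f | f ∈ holes a ∧ ∀ γ ∈ affSemigroup a, γ ≠ 0 → f + γ ∈ affSemigroup a}

/-- The toric (defining) ideal of the semigroup ring `K[Γ]`: the kernel of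
`K[x₁,…,x_n] → K[t₁,…,t_d]`, `x_i ↦ t^{a_i}`. -/
def toricIdeal (K : Type*) [Field K] {n d : ℕ} (a : Fin n → Fin d → ℕ) :
    Ideal (MvPolynomial (Fin n) K) :=
  RingHom.ker (MvPolynomial.aeval
      (fun i => MvPolynomial.monomial (Finsupp.equivFunOnFinite.symm (a i)) (1 : K)) :
    MvPolynomial (Fin n) K →ₐ[K] MvPolynomial (Fin d) K)

/-- The `Γ`-degree of an exponent vector: `e ↦ Σ eᵢ • aᵢ ∈ ℕ^d`. -/
def gammaDeg {n d : ℕ} (a : Fin n → Fin d → ℕ) (e : Fin n →₀ ℕ) : Fin d → ℕ :=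
  ∑ i, e i • a i

/-- A (finite) minimal `Γ`-graded free resolution of the semigroup ring
`K[Γ] = K[x₁,…,x_n]/I_Γ` over the polynomial ring `R = K[x₁,…,x_n]`:
`⋯ → R^{β₂} → R^{β₁} → R^{β₀} = R → K[Γ] → 0`,
where the `i`-th free module `R^{βᵢ}` has generators of `Γ`-degrees `deg i j`, the
differentials are given by matrices `mat i` whose entries are `Γ`-homogeneous of the
appropriate degrees and lie in the graded maximal ideal (minimality), and the complex
is exact. -/
structure MinFreeRes (K : Type*) [Field K] {n d : ℕ} (a : Fin n → Fin d → ℕ) where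
  /-- the Betti numbers -/
  β : ℕ → ℕ
  β0 : β 0 = 1
  /-- the resolution has finite length -/
  bdd : ∃ N, ∀ i, N ≤ i → β i = 0
  /-- the `Γ`-degrees of the generators (the `i`-Betti `Γ`-degrees) -/
  deg : (i : ℕ) → Fin (β i) → (Fin d → ℕ)
  deg0 : ∀ j, deg 0 j = 0
  /-- the matrix of the differential `R^{β_{i+1}} → R^{βᵢ}`;
  `mat i j j'` is the entry with source generator `j` and target generator `j'` -/
  mat : (i : ℕ) → Fin (β (i + 1)) → Fin (β i) → MvPolynomial (Fin n) K
  /-- the differentials are `Γ`-graded -/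
  homog : ∀ i j j', ∀ e ∈ (mat i j j').support,
    deg (i + 1) j = gammaDeg a e + deg i j'
  /-- minimality: all entries lie in the maximal ideal `(x₁,…,x_n)` -/
  minimal : ∀ i j j', MvPolynomial.coeff 0 (mat i j j') = 0
  /-- exactness at homological degree `0`: the kernel of the augmentation
  `R^{β₀} → K[Γ] = R/I_Γ` is the image of the first differential -/
  exact_zero :
    LinearMap.ker ((toricIdeal K a).mkQ ∘ₗ
        (LinearMap.lsum (MvPolynomial (Fin n) K)
            (fun _ : Fin (β 0) => MvPolynomial (Fin n) K) ℕ)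
          fun _ => LinearMap.id) =
      LinearMap.range (Matrix.mulVecLin (Matrix.of fun j' j => mat 0 j j'))
  /-- exactness at all higher homological degrees -/
  exact_succ : ∀ i,
    LinearMap.ker (Matrix.mulVecLin (Matrix.of fun j' j => mat i j j')) =
      LinearMap.range (Matrix.mulVecLin (Matrix.of fun j' j => mat (i + 1) j j'))

/-- The length (projective dimension of `K[Γ]`) of a minimal free resolution. -/
def MinFreeRes.pd {K : Type*} [Field K] {n d : ℕ} {a : Fin n → Fin d → ℕ}
    (F : MinFreeRes K a) : ℕ :=
  sSup {i | F.β i ≠ 0}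

/-- The multiset `ℬᵢ` of `i`-Betti `Γ`-degrees of a minimal free resolution. -/
def MinFreeRes.Betti {K : Type*} [Field K] {n d : ℕ} {a : Fin n → Fin d → ℕ}
    (F : MinFreeRes K a) (i : ℕ) : Multiset (Fin d → ℕ) :=
  Multiset.map (F.deg i) Finset.univ.val

/-- `Γ` is a maximal projective dimension (MPD) semigroup:
`pd_R K[Γ] = n − 1`, i.e. some (hence any) minimal graded free resolution of `K[Γ]`
has length `n − 1`. -/
def IsMPD (K : Type*) [Field K] {n d : ℕ} (a : Fin n → Fin d → ℕ) : Prop :=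
  ∃ F : MinFreeRes K a, F.pd = n - 1

section Complexes

open Matrix

/-- The square matrix `D`, acting on the direct sum `R ^ J` of the terms of a finite complex of free
modules, is a free resolution of `R ⧸ I`. The term in homological degree `0` has the single
generator `o`, so the augmentation is `x ↦ x o`. -/
structure ResolvesQuotient {R J : Type*} [CommRing R] [Fintype J] (D : Matrix J J R) (o : J)
    (I : Ideal R) : Prop where
  sq : D * D = 0
  col_base : ∀ k, D k o = 0
  aug : ∀ j, D o j ∈ I
  exact : ∀ x, D.mulVec x = 0 → x o ∈ I → ∃ y, D.mulVec y = x

namespace ResolvesQuotient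

variable {R J L : Type*} [CommRing R] [Fintype J] [Fintype L]
  {D : Matrix J J R} {o : J} {I : Ideal R}

lemma exists_mulVec_eq (hD : ResolvesQuotient D o I) {x : J → R} (hx : D *ᵥ x = 0)
    (hxo : x o ∈ I) : ∃ y, D *ᵥ y = x ∧ y o = 0 := by
  classical
  obtain ⟨y, rfl⟩ := hD.exact x hx hxo
  refine ⟨Function.update y o 0, funext fun k => Finset.sum_congr rfl fun j _ => ?_, by simp⟩
  rcases eq_or_ne j o with rfl | hj
  · simp [hD.col_base]
  · simp [hj]

lemma mul_defect (hD : ResolvesQuotient D o I) {E : Matrix L L R} (hE : E * E = 0)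
    {Z : Matrix J L R} (hZ : D * Z + Z * E = 0) (X : Matrix J L R) :
    D * (X * E + Z - D * X) = -((X * E + Z - D * X) * E) := by
  have hDD : D * (D * X) = 0 := by rw [← Matrix.mul_assoc, hD.sq, Matrix.zero_mul]
  have hEE : X * E * E = 0 := by rw [Matrix.mul_assoc, hE, Matrix.mul_zero]
  rw [Matrix.mul_sub, Matrix.mul_add, Matrix.sub_mul, Matrix.add_mul, hDD, hEE,
    ← Matrix.mul_assoc, eq_neg_of_add_eq_zero_left hZ]
  abel

/-- Multiplication by `E` feeds the columns at height `N` only with lower columns, where the defect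
`Y` of the equation vanishes. So the columns of `Y` at height `N` are cycles, hence boundaries, and
the equation can be corrected there. -/
lemma exists_mul_eq_of_lt_succ (hD : ResolvesQuotient D o I) {E : Matrix L L R} {Z : Matrix J L R}
    {h : L → ℕ} (htri : ∀ k j, E k j ≠ 0 → h k < h j) (hE : E * E = 0)
    (hZ : D * Z + Z * E = 0) (hZo : ∀ j, Z o j ∈ I) {N : ℕ} {X : Matrix J L R}
    (hXo : ∀ j, X o j = 0) (hX : ∀ j, h j < N → ∀ k, (D * X) k j = (X * E + Z) k j) :
    ∃ X' : Matrix J L R, (∀ j, X' o j = 0) ∧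
      ∀ j, h j < N + 1 → ∀ k, (D * X') k j = (X' * E + Z) k j := by
  set Y := X * E + Z - D * X with hY
  have hmulE {Y : Matrix J L R} {j : L} (hj : h j ≤ N) (hYj : ∀ k l, h l < N → Y k l = 0) (k : J) :
      (Y * E) k j = 0 := by
    rw [Matrix.mul_apply]
    refine Finset.sum_eq_zero fun l _ => ?_
    by_cases hl : E l j = 0
    · rw [hl, mul_zero]
    · rw [hYj k l ((htri l j hl).trans_le hj), zero_mul]
  have hcycle (j : L) (hj : h j = N) : D *ᵥ Y.col j = 0 := by
    ext k
    have hDY := congrFun₂ (hD.mul_defect hE hZ X) k j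
    rwa [Matrix.neg_apply, hmulE hj.le fun k l hl => by simp [hX l hl], neg_zero] at hDY
  have hYo (j : L) : Y.col j o ∈ I := by
    have hDX : (D * X) o j ∈ I := I.sum_mem fun k _ => I.mul_mem_right _ (hD.aug k)
    have hXE : (X * E) o j = 0 := by simp [Matrix.mul_apply, hXo]
    simpa [hY, hXE] using I.sub_mem (hZo j) hDX
  choose y hy hyo using fun j : {j // h j = N} => hD.exists_mulVec_eq (hcycle j j.2) (hYo j)
  let W : Matrix J L R := of fun k j => if hj : h j = N then y ⟨j, hj⟩ k else 0
  have hDW (j : L) (k : J) : (D * W) k j = if h j = N then Y k j else 0 := by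
    split_ifs with hj
    · simpa [W, hj, Matrix.mul_apply, mulVec, dotProduct] using congrFun (hy ⟨j, hj⟩) k
    · simp [W, hj, Matrix.mul_apply]
  refine ⟨X + W, fun j => by simp [W, hXo, hyo], fun j hj k => ?_⟩
  have hWE := hmulE (Y := W) (Nat.le_of_lt_succ hj) (fun k l hl => by simp [W, hl.ne]) k
  rw [Matrix.mul_add, Matrix.add_mul]
  simp only [Matrix.add_apply, hDW, hWE, add_zero]
  split_ifs with hjN
  · simp [hY]
  · simpa using hX j (by lia) k

theorem exists_mul_eq (hD : ResolvesQuotient D o I) {E : Matrix L L R} {Z : Matrix J L R}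
    {h : L → ℕ} (htri : ∀ k j, E k j ≠ 0 → h k < h j) (hE : E * E = 0)
    (hZ : D * Z + Z * E = 0) (hZo : ∀ j, Z o j ∈ I) :
    ∃ X : Matrix J L R, D * X = X * E + Z ∧ ∀ j, X o j = 0 := by
  have key (N : ℕ) : ∃ X : Matrix J L R, (∀ j, X o j = 0) ∧
      ∀ j, h j < N → ∀ k, (D * X) k j = (X * E + Z) k j := by
    induction N with
    | zero => exact ⟨0, by simp⟩
    | succ N ih =>
      obtain ⟨X, hXo, hX⟩ := ih
      exact hD.exists_mul_eq_of_lt_succ htri hE hZ hZo hXo hX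
  obtain ⟨X, hXo, hX⟩ := key (Finset.univ.sup h + 1)
  exact ⟨X, Matrix.ext fun k j =>
    hX j (Nat.lt_succ_of_le (Finset.le_sup (Finset.mem_univ j))) k, hXo⟩

end ResolvesQuotient

lemma exists_eq_sum_of_map_mulVec_eq_zero {A S P Q : Type*} [CommRing A] [CommRing S] [Finite P]
    [Fintype Q] {φ : A →+* S} (hφ : φ.Flat) (M : Matrix P Q A) {x : Q → S}
    (hx : M.map φ *ᵥ x = 0) :
    ∃ (n : ℕ) (a : Fin n → Q → A) (y : Fin n → S),
      (∀ l, M *ᵥ a l = 0) ∧ ∀ q, x q = ∑ l, y l * φ (a l q) := by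
  classical
  cases nonempty_fintype P
  algebraize [φ]
  let f : (P → A) →ₗ[A] (Q → A) := Mᵀ.mulVecLin
  let ξ : (Q → A) →ₗ[A] S := Fintype.linearCombination A x
  have hξ : ξ ∘ₗ f = 0 := by
    ext p
    simpa [f, ξ, Fintype.linearCombination_apply, Algebra.smul_def, mulVec, dotProduct,
      RingHom.algebraMap_toAlgebra] using congrFun hx p
  obtain ⟨n, a, y, hya, haf⟩ := Module.Flat.exists_factorization_of_comp_eq_zero_of_free hξ
  refine ⟨n, fun l q => a (Pi.single q 1) l, fun l => y (Finsupp.single l 1), fun l => ?_,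
    fun q => ?_⟩
  · ext p
    have hfp : f (Pi.single p 1) = ∑ q, M p q • Pi.single q 1 := by
      ext q
      simp [f, Pi.single_apply]
    simpa [hfp, mulVec, dotProduct] using
      DFunLike.congr_fun (LinearMap.congr_fun haf (Pi.single p 1)) l
  · calc x q = y (a (Pi.single q 1)) := by
          rw [← LinearMap.comp_apply, ← hya]
          simp [ξ, Fintype.linearCombination_apply, Pi.single_apply]
      _ = ∑ l, y (Finsupp.single l (a (Pi.single q 1) l)) := by
          rw [← map_sum, Finsupp.univ_sum_single]
      _ = ∑ l, y (Finsupp.single l 1) * φ (a (Pi.single q 1) l) :=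
          Finset.sum_congr rfl fun l _ => by
            rw [← Finsupp.smul_single_one, map_smul, Algebra.smul_def, mul_comm,
              RingHom.algebraMap_toAlgebra]

namespace ResolvesQuotient

variable {A S J : Type*} [CommRing A] [CommRing S] [Fintype J]
  {D : Matrix J J A} {o : J} {I : Ideal A}

/-- Membership of `x o` in the extended ideal is one more linear equation over `A`, so flatness
applies to `D` bordered by generators of `I`. -/
theorem map (hD : ResolvesQuotient D o I) {φ : A →+* S} (hφ : φ.Flat) :
    ResolvesQuotient (D.map φ) o (I.map φ) where
  sq := by rw [← Matrix.map_mul, hD.sq, Matrix.map_zero _ (map_zero φ)]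
  col_base k := by simp [hD.col_base]
  aug j := Ideal.mem_map_of_mem φ (hD.aug j)
  exact x hx hxo := by
    classical
    obtain ⟨m, c, g, hcg⟩ := Submodule.mem_span_set'.mp hxo
    choose i hiI hi using fun t => (g t).2
    let M : Matrix (J ⊕ Unit) (J ⊕ Fin m) A :=
      fromBlocks D 0 (of fun _ => Pi.single o 1) (of fun _ => -i)
    have hM : M.map φ *ᵥ Sum.elim x c = 0 := by
      have hc : ∑ t, φ (i t) * c t = x o := by simp [← hcg, hi, mul_comm]
      ext (k | u)
      · simpa [M, mulVec, dotProduct] using congrFun hx k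
      · simp [M, mulVec, dotProduct, Pi.single_apply, apply_ite φ, hc]
    obtain ⟨n, a, y, ha, hxy⟩ := exists_eq_sum_of_map_mulVec_eq_zero hφ M hM
    have hz (l : Fin n) : ∃ z, D *ᵥ z = a l ∘ Sum.inl := by
      refine hD.exact _ ?_ ?_
      · ext k
        simpa [M, mulVec, dotProduct] using congrFun (ha l) (.inl k)
      · have hao : a l (.inl o) = ∑ t, i t * a l (.inr t) := by
          simpa [M, mulVec, dotProduct, Pi.single_apply, add_neg_eq_zero] using
            congrFun (ha l) (.inr ())
        simpa [hao] using I.sum_mem fun t _ => I.mul_mem_right (a l (.inr t)) (hiI t)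
    choose z hz using hz
    refine ⟨∑ l, y l • (φ ∘ z l), funext fun k => ?_⟩
    have hφz (l : Fin n) : (D.map φ *ᵥ (φ ∘ z l)) k = φ (a l (.inl k)) := by
      rw [← RingHom.map_mulVec, hz]; rfl
    simpa [mulVec_sum, mulVec_smul, hφz] using (hxy (.inl k)).symm

end ResolvesQuotient

end Complexes

section TensorProduct

open Matrix
open scoped Kronecker

variable {R S J₁ J₂ : Type*} [CommRing R] [CommRing S] [Fintype J₁] [DecidableEq J₁] [Fintype J₂]
  [DecidableEq J₂]

/-- The diagonal matrix of the signs `(-1) ^ h j`, used in the differential of a tensor product. -/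
def signMatrix (R : Type*) {J : Type*} [CommRing R] [DecidableEq J] (h : J → ℕ) : Matrix J J R :=
  diagonal fun j => (-1) ^ h j

lemma signMatrix_mul_self (h : J₁ → ℕ) : signMatrix R h * signMatrix R h = 1 := by
  simp [signMatrix, ← mul_pow]

omit [Fintype J₁] in
lemma transpose_signMatrix (h : J₁ → ℕ) : (signMatrix R h)ᵀ = signMatrix R h :=
  diagonal_transpose _

lemma signMatrix_mul {h : J₁ → ℕ} {D : Matrix J₁ J₁ R} (hD : ∀ k j, D k j ≠ 0 → h j = h k + 1) :
    signMatrix R h * D = -(D * signMatrix R h) := by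
  ext k j
  by_cases hkj : D k j = 0
  · simp [signMatrix, hkj]
  · simp [signMatrix, hD k j hkj, pow_succ, mul_comm]

/-- The differential `D₁ ⊗ 1 + (-1) ^ h ⊗ D₂` of the tensor product of two complexes, where `h`
gives the homological degrees of the generators of the first one. -/
def tensorDifferential (h : J₁ → ℕ) (D₁ : Matrix J₁ J₁ R) (D₂ : Matrix J₂ J₂ R) :
    Matrix (J₁ × J₂) (J₁ × J₂) R :=
  D₁ ⊗ₖ 1 + signMatrix R h ⊗ₖ D₂

variable {h : J₁ → ℕ} {D₁ : Matrix J₁ J₁ R} {D₂ : Matrix J₂ J₂ R} {o₁ : J₁} {o₂ : J₂}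
  {I₁ I₂ : Ideal R}

/-- Elements of `R ^ (J₁ × J₂)` are read as matrices through `vec`; boundaries in the tensor product
then become values of a Sylvester operator, to which `ResolvesQuotient.exists_mul_eq` applies. -/
lemma tensorDifferential_mulVec_vec (h : J₁ → ℕ) (D₁ : Matrix J₁ J₁ R) (D₂ : Matrix J₂ J₂ R)
    (X : Matrix J₂ J₁ R) :
    tensorDifferential h D₁ D₂ *ᵥ vec X = vec (X * D₁ᵀ + D₂ * X * signMatrix R h) := by
  rw [tensorDifferential, add_mulVec, kronecker_mulVec_vec, kronecker_mulVec_vec, Matrix.one_mul,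
    transpose_signMatrix, vec_add]

lemma tensorDifferential_sq (hD : ∀ k j, D₁ k j ≠ 0 → h j = h k + 1) (h₁ : D₁ * D₁ = 0)
    (h₂ : D₂ * D₂ = 0) : tensorDifferential h D₁ D₂ * tensorDifferential h D₁ D₂ = 0 := by
  simp only [tensorDifferential, Matrix.mul_add, Matrix.add_mul, ← mul_kronecker_mul, h₁, h₂,
    signMatrix_mul hD, Matrix.mul_one, Matrix.one_mul, zero_kronecker, kronecker_zero, zero_add,
    add_zero, ← add_kronecker, neg_add_cancel]

omit [DecidableEq J₂] in
lemma exists_tensor_boundary_eq (hD : ∀ k j, D₁ k j ≠ 0 → h j = h k + 1) (h₁ : D₁ * D₁ = 0)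
    (h₂ : ResolvesQuotient D₂ o₂ I₂) {X : Matrix J₂ J₁ R}
    (hX : X * D₁ᵀ + D₂ * X * signMatrix R h = 0) (hXo : ∀ j, X o₂ j ∈ I₂) :
    ∃ Y : Matrix J₂ J₁ R, Y * D₁ᵀ + D₂ * Y * signMatrix R h = X := by
  set s := signMatrix R h
  have hss : s * s = 1 := signMatrix_mul_self h
  have hsDs : s * D₁ᵀ * s = -D₁ᵀ := by
    have hsD : s * D₁ * s = -D₁ := by
      rw [signMatrix_mul hD, Matrix.neg_mul, Matrix.mul_assoc, hss, Matrix.mul_one]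
    simpa [s, transpose_mul, transpose_signMatrix, Matrix.mul_assoc] using congrArg transpose hsD
  obtain ⟨Y, hY, -⟩ := h₂.exists_mul_eq (E := s * D₁ᵀ) (Z := X * s)
    (h := fun j => Finset.univ.sup h - h j)
    (fun k j hkj => by
      have hk : h k = h j + 1 := hD j k fun h0 => hkj (by simp [s, signMatrix, h0])
      have := Finset.le_sup (f := h) (Finset.mem_univ k)
      lia)
    (by rw [← Matrix.mul_assoc, hsDs, Matrix.neg_mul, ← transpose_mul, h₁, transpose_zero,
      neg_zero])
    (by rw [← Matrix.mul_assoc, Matrix.mul_assoc X, ← Matrix.mul_assoc s, hss, Matrix.one_mul,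
      add_comm, hX])
    (fun j => by simpa [s, signMatrix] using I₂.mul_mem_right _ (hXo j))
  refine ⟨Y, ?_⟩
  rw [hY, Matrix.add_mul, Matrix.mul_assoc, hsDs, Matrix.mul_assoc, hss, Matrix.mul_one,
    Matrix.mul_neg, add_neg_cancel_left]

omit [DecidableEq J₂] in
/-- Modulo `I₂` the row `o₂` of a cycle is a cycle of the first complex, which `π` keeps exact; a
lifted preimage, placed in row `o₂`, corrects `X`. -/
lemma exists_tensor_boundary_sub_mem (h₂ : ResolvesQuotient D₂ o₂ I₂) {π : R →+* S}
    (hπ : Function.Surjective π) (hker : RingHom.ker π = I₂)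
    (hπ₁ : ResolvesQuotient (D₁.map π) o₁ (I₁.map π)) {X : Matrix J₂ J₁ R}
    (hX : X * D₁ᵀ + D₂ * X * signMatrix R h = 0) (hXo : X o₂ o₁ ∈ I₁ ⊔ I₂) :
    ∃ Y : Matrix J₂ J₁ R, ∀ j, (X - (Y * D₁ᵀ + D₂ * Y * signMatrix R h)) o₂ j ∈ I₂ := by
  classical
  have hcycle : D₁.map π *ᵥ (π ∘ X.row o₂) = 0 := by
    ext k
    have hk : (X * D₁ᵀ) o₂ k ∈ RingHom.ker π := by
      rw [eq_neg_of_add_eq_zero_left hX, hker, Matrix.mul_assoc]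
      exact I₂.neg_mem (I₂.sum_mem fun l _ => I₂.mul_mem_right _ (h₂.aug l))
    simpa [RingHom.mem_ker, Matrix.mul_apply, mulVec, dotProduct, mul_comm] using hk
  have hbase : π (X o₂ o₁) ∈ I₁.map π := by
    have hI₂ : I₂.map π = ⊥ := by rw [Ideal.map_eq_bot_iff_le_ker, hker]
    simpa [Ideal.map_sup, hI₂] using Ideal.mem_map_of_mem π hXo
  obtain ⟨y, hy⟩ := hπ₁.exact _ hcycle hbase
  choose z hz using fun j => hπ (y j)
  have hDY : D₂ * vecMulVec (Pi.single o₂ 1) z = 0 := by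
    rw [mul_vecMulVec, mulVec_single_one, show D₂.col o₂ = 0 from funext h₂.col_base,
      zero_vecMulVec]
  refine ⟨vecMulVec (Pi.single o₂ 1) z, fun k => ?_⟩
  have hk : π (X o₂ k) = ∑ j, π (D₁ k j) * y j := congrFun hy.symm k
  rw [← hker, RingHom.mem_ker, hDY, Matrix.zero_mul, add_zero]
  simp [vecMulVec_mul, vecMul_transpose, mulVec, dotProduct, vecMulVec_apply, hk, hz]

theorem ResolvesQuotient.tensor (h₁ : ResolvesQuotient D₁ o₁ I₁) (h₂ : ResolvesQuotient D₂ o₂ I₂)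
    (hD : ∀ k j, D₁ k j ≠ 0 → h j = h k + 1) {π : R →+* S} (hπ : Function.Surjective π)
    (hker : RingHom.ker π = I₂) (hπ₁ : ResolvesQuotient (D₁.map π) o₁ (I₁.map π)) :
    ResolvesQuotient (tensorDifferential h D₁ D₂) (o₁, o₂) (I₁ ⊔ I₂) where
  sq := tensorDifferential_sq hD h₁.sq h₂.sq
  col_base k := by simp [tensorDifferential, h₁.col_base, h₂.col_base]
  aug _ := Ideal.add_mem _ (Ideal.mul_mem_right _ _ (Ideal.mem_sup_left (h₁.aug _)))
    (Ideal.mul_mem_left _ _ (Ideal.mem_sup_right (h₂.aug _)))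
  exact x hx hxo := by
    obtain ⟨X, rfl⟩ := vec_bijective.surjective x
    rw [tensorDifferential_mulVec_vec, vec_eq_zero_iff] at hx
    obtain ⟨Y, hY⟩ := exists_tensor_boundary_sub_mem h₂ hπ hker hπ₁ hx hxo
    have hcycle : tensorDifferential h D₁ D₂ *ᵥ
        vec (X - (Y * D₁ᵀ + D₂ * Y * signMatrix R h)) = 0 := by
      rw [vec_sub, mulVec_sub, ← tensorDifferential_mulVec_vec, mulVec_mulVec,
        tensorDifferential_sq hD h₁.sq h₂.sq, zero_mulVec, tensorDifferential_mulVec_vec, hx,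
        vec_zero, sub_zero]
    rw [tensorDifferential_mulVec_vec, vec_eq_zero_iff] at hcycle
    obtain ⟨W, hW⟩ := exists_tensor_boundary_eq hD h₁.sq h₂ hcycle hY
    refine ⟨vec (W + Y), ?_⟩
    rw [vec_add, mulVec_add, tensorDifferential_mulVec_vec, tensorDifferential_mulVec_vec, hW,
      vec_sub, sub_add_cancel]

end TensorProduct

section Homogeneous

variable {G R σ J L : Type*} [AddCommGroup G] [CommRing R] [SetLike σ R]
  [AddSubgroupClass σ R]
  {𝒜 : G → σ} {n m : ℕ} {d : J → ℕ × G} {d' : L → ℕ × G}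

/-- `X` is the matrix of a graded map lowering the homological degree by `n`, between free modules
with generators of degrees `d` (source) and `d'` (target). A degree in `ℕ × G` consists of the
homological degree and the internal degree. -/
def IsHomogeneousMatrix (𝒜 : G → σ) (n : ℕ) (d' : L → ℕ × G) (d : J → ℕ × G)
    (X : Matrix L J R) : Prop :=
  ∀ k j, X k j ≠ 0 → (d j).1 = (d' k).1 + n ∧ X k j ∈ 𝒜 ((d j).2 - (d' k).2)

namespace IsHomogeneousMatrix

lemma mem {X : Matrix L J R} (hX : IsHomogeneousMatrix 𝒜 n d' d X) (k : L) (j : J) :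
    X k j ∈ 𝒜 ((d j).2 - (d' k).2) := by
  by_cases h : X k j = 0
  · exact h ▸ zero_mem _
  · exact (hX k j h).2

lemma add {X Y : Matrix L J R} (hX : IsHomogeneousMatrix 𝒜 n d' d X)
    (hY : IsHomogeneousMatrix 𝒜 n d' d Y) : IsHomogeneousMatrix 𝒜 n d' d (X + Y) := by
  refine fun k j hkj => ⟨?_, add_mem (hX.mem k j) (hY.mem k j)⟩
  by_cases h : X k j = 0
  · exact (hY k j fun h' => hkj (by simp [h, h'])).1
  · exact (hX k j h).1

variable [DecidableEq G] [GradedRing 𝒜]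

lemma one [DecidableEq J] : IsHomogeneousMatrix 𝒜 0 d d (1 : Matrix J J R) := by
  intro k j hkj
  obtain rfl : k = j := by_contra fun h => hkj (Matrix.one_apply_ne h)
  simpa using SetLike.one_mem_graded 𝒜

lemma signMatrix [DecidableEq J] (h : J → ℕ) :
    IsHomogeneousMatrix 𝒜 0 d d (signMatrix R h) := by
  intro k j hkj
  obtain rfl : k = j := by_contra fun h => hkj (Matrix.diagonal_apply_ne _ h)
  rcases neg_one_pow_eq_or R (h k) with hk | hk <;>
    simpa [_root_.signMatrix, hk] using SetLike.one_mem_graded 𝒜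

open scoped Kronecker in
lemma kronecker {P Q : Type*} {e' : P → ℕ × G} {e : Q → ℕ × G} {X : Matrix L J R}
    {Y : Matrix P Q R} (hX : IsHomogeneousMatrix 𝒜 n d' d X)
    (hY : IsHomogeneousMatrix 𝒜 m e' e Y) :
    IsHomogeneousMatrix 𝒜 (n + m) (fun k => d' k.1 + e' k.2) (fun j => d j.1 + e j.2)
      (X ⊗ₖ Y) := by
  rintro ⟨k, p⟩ ⟨j, q⟩ h
  obtain ⟨hX₁, hX₂⟩ := hX k j (left_ne_zero_of_mul h)
  obtain ⟨hY₁, hY₂⟩ := hY p q (right_ne_zero_of_mul h)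
  refine ⟨by simp only [Prod.fst_add]; lia, ?_⟩
  have := SetLike.mul_mem_graded hX₂ hY₂
  rwa [sub_add_sub_comm] at this

end IsHomogeneousMatrix

variable [DecidableEq G] [GradedRing 𝒜]

/-- The component of `X` that is homogeneous in the sense of `IsHomogeneousMatrix 𝒜 n d' d`. -/
def homogeneousPart (𝒜 : G → σ) [GradedRing 𝒜] (n : ℕ) (d' : L → ℕ × G) (d : J → ℕ × G)
    (X : Matrix L J R) : Matrix L J R :=
  Matrix.of fun k j =>
    if (d j).1 = (d' k).1 + n then GradedRing.proj 𝒜 ((d j).2 - (d' k).2) (X k j) else 0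

lemma isHomogeneousMatrix_homogeneousPart (X : Matrix L J R) :
    IsHomogeneousMatrix 𝒜 n d' d (homogeneousPart 𝒜 n d' d X) := by
  intro k j hkj
  have hdeg : (d j).1 = (d' k).1 + n := by
    by_contra h
    simp [homogeneousPart, h] at hkj
  exact ⟨hdeg, by simp [homogeneousPart, hdeg]⟩

lemma homogeneousPart_mul_left [Fintype L] {D : Matrix L L R}
    (hD : IsHomogeneousMatrix 𝒜 n d' d' D) (X : Matrix L J R) :
    homogeneousPart 𝒜 (m + n) d' d (D * X) = D * homogeneousPart 𝒜 m d' d X := by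
  ext k j
  have hterm (l : L) : (if (d j).1 = (d' k).1 + (m + n) then
      GradedRing.proj 𝒜 ((d j).2 - (d' k).2) (D k l * X l j) else 0) =
      D k l * homogeneousPart 𝒜 m d' d X l j := by
    by_cases hkl : D k l = 0
    · simp [hkl]
    obtain ⟨hdeg, hmem⟩ := hD k l hkl
    have hcond : (d j).1 = (d' k).1 + (m + n) ↔ (d j).1 = (d' l).1 + m := by lia
    have hshift : (d j).2 - (d' k).2 = ((d' l).2 - (d' k).2) + ((d j).2 - (d' l).2) := by abel
    have hproj : GradedRing.proj 𝒜 ((d j).2 - (d' k).2) (D k l * X l j) =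
        D k l * GradedRing.proj 𝒜 ((d j).2 - (d' l).2) (X l j) := by
      rw [hshift, GradedRing.proj_apply, DirectSum.coe_decompose_mul_add_of_left_mem 𝒜 hmem,
        GradedRing.proj_apply]
    simp only [homogeneousPart, Matrix.of_apply, hcond, hproj, mul_ite, mul_zero]
  rw [Matrix.mul_apply, ← Finset.sum_congr rfl fun l _ => hterm l]
  simp [homogeneousPart, Matrix.mul_apply]

lemma homogeneousPart_mul_right [Fintype J] {D : Matrix J J R}
    (hD : IsHomogeneousMatrix 𝒜 n d d D) (X : Matrix L J R) :
    homogeneousPart 𝒜 (m + n) d' d (X * D) = homogeneousPart 𝒜 m d' d X * D := by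
  ext k j
  have hterm (l : J) : (if (d j).1 = (d' k).1 + (m + n) then
      GradedRing.proj 𝒜 ((d j).2 - (d' k).2) (X k l * D l j) else 0) =
      homogeneousPart 𝒜 m d' d X k l * D l j := by
    by_cases hlj : D l j = 0
    · simp [hlj]
    obtain ⟨hdeg, hmem⟩ := hD l j hlj
    have hcond : (d j).1 = (d' k).1 + (m + n) ↔ (d l).1 = (d' k).1 + m := by lia
    have hshift : (d j).2 - (d' k).2 = ((d l).2 - (d' k).2) + ((d j).2 - (d l).2) := by abel
    have hproj : GradedRing.proj 𝒜 ((d j).2 - (d' k).2) (X k l * D l j) =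
        GradedRing.proj 𝒜 ((d l).2 - (d' k).2) (X k l) * D l j := by
      rw [hshift, GradedRing.proj_apply, DirectSum.coe_decompose_mul_add_of_right_mem 𝒜 hmem,
        GradedRing.proj_apply]
    simp only [homogeneousPart, Matrix.of_apply, hcond, hproj, ite_mul, zero_mul]
  rw [Matrix.mul_apply, ← Finset.sum_congr rfl fun l _ => hterm l]
  simp [homogeneousPart, Matrix.mul_apply]

end Homogeneous

section Minimal

lemma card_fiber_le_of_mul_eq_one {k J L ι : Type*} [CommRing k] [Nontrivial k] [Fintype J]
    [DecidableEq J] [Fintype L] [DecidableEq ι] {A : Matrix L J k} {B : Matrix J L k}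
    (hBA : B * A = 1)
    {d : J → ι} {d' : L → ι} (hA : ∀ l j, A l j ≠ 0 → d' l = d j) (s : ι) :
    Fintype.card {j // d j = s} ≤ Fintype.card {l // d' l = s} := by
  let A' : Matrix {l // d' l = s} {j // d j = s} k := A.submatrix (↑) (↑)
  let B' : Matrix {j // d j = s} {l // d' l = s} k := B.submatrix (↑) (↑)
  have hBA' : B' * A' = 1 := by
    ext i j
    have hout : ∑ l : {l // d' l ≠ s}, B i l * A l j = 0 := Finset.sum_eq_zero fun l _ => by
      have hl : A l j = 0 := by_contra fun h => l.2 ((hA l j h).trans j.2)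
      rw [hl, mul_zero]
    have hij := Fintype.sum_subtype_add_sum_subtype (d' · = s) fun l => B i l * A l j
    rw [hout, add_zero, ← Matrix.mul_apply, hBA] at hij
    simpa [Matrix.mul_apply, A', B', Matrix.one_apply, Subtype.ext_iff] using hij
  have hinj : Function.Injective A'.mulVecLin :=
    Function.LeftInverse.injective (g := B'.mulVec) fun x => by
      simp [hBA']
  exact card_le_of_injective k A'.mulVecLin hinj

variable {G R k σ J L : Type*} [AddCommGroup G] [CommRing R] [CommRing k]
  [SetLike σ R] [Fintype J] [Fintype L]

/-- `D` is a minimal graded free resolution of `R ⧸ I` whose generators have the (homological and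
internal) degrees `deg`. Minimality is relative to a homomorphism `φ` annihilating the entries of
`D`; over a polynomial ring this is `MvPolynomial.constantCoeff`. -/
structure IsMinimalResolution (𝒜 : G → σ) (φ : R →+* k) (D : Matrix J J R) (o : J)
    (deg : J → ℕ × G) (I : Ideal R) : Prop extends ResolvesQuotient D o I where
  deg_base : deg o = 0
  homogeneous : IsHomogeneousMatrix 𝒜 1 deg deg D
  minimal : ∀ i j, φ (D i j) = 0

namespace IsMinimalResolution

variable {𝒜 : G → σ} {φ : R →+* k} {D : Matrix J J R} {o : J} {deg : J → ℕ × G} {I : Ideal R}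
  {D' : Matrix L L R} {o' : L} {deg' : L → ℕ × G}

lemma height_lt (hD : IsMinimalResolution 𝒜 φ D o deg I) (i j : J) (hij : D i j ≠ 0) :
    (deg i).1 < (deg j).1 := by
  rw [(hD.homogeneous i j hij).1]
  exact Nat.lt_succ_self _

theorem map {R' σ' : Type*} [CommRing R'] [SetLike σ' R'] {ℬ : G → σ'}
    {ψ : R' →+* k} (hD : IsMinimalResolution 𝒜 φ D o deg I) {ι : R →+* R'} (hι : ι.Flat)
    (hgr : ∀ g, ∀ x ∈ 𝒜 g, ι x ∈ ℬ g) (hψ : ψ.comp ι = φ) :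
    IsMinimalResolution ℬ ψ (D.map ι) o deg (I.map ι) where
  toResolvesQuotient := hD.toResolvesQuotient.map hι
  deg_base := hD.deg_base
  homogeneous i j hij :=
    have h := hD.homogeneous i j fun h => hij (by simp [h])
    ⟨h.1, hgr _ _ h.2⟩
  minimal i j := by rw [Matrix.map_apply, ← RingHom.comp_apply, hψ, hD.minimal]

theorem map_eq_one_of_commute [DecidableEq J] (hD : IsMinimalResolution 𝒜 φ D o deg I)
    {f : Matrix J J R} (hf : D * f = f * D) (hfo : f.row o = Pi.single o 1) :
    φ.mapMatrix f = 1 := by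
  -- For the differential `-D` on the source, a solution of the matrix equation is a homotopy.
  obtain ⟨H, hH, -⟩ := hD.exists_mul_eq (E := -D) (Z := f - 1) (h := fun j => (deg j).1)
    (fun i j hij => hD.height_lt i j (neg_ne_zero.mp hij))
    (by rw [neg_mul_neg, hD.sq])
    (by rw [Matrix.mul_neg, Matrix.mul_sub, Matrix.sub_mul, hf, Matrix.mul_one, Matrix.one_mul,
      add_neg_cancel])
    (fun j => by
      have hj : f o j = (1 : Matrix J J R) o j := by
        rw [Matrix.one_eq_pi_single]
        exact congrFun hfo j
      simp [hj])
  have hφD : φ.mapMatrix D = 0 := Matrix.ext hD.minimal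
  have h := congrArg φ.mapMatrix hH
  rw [map_mul, map_add, map_mul, map_neg, hφD, Matrix.zero_mul, neg_zero, Matrix.mul_zero,
    zero_add, map_sub, map_one] at h
  exact sub_eq_zero.mp h.symm

variable [AddSubgroupClass σ R] [DecidableEq G] [GradedRing 𝒜]

theorem exists_comparison [DecidableEq J] (hD : IsMinimalResolution 𝒜 φ D o deg I)
    (hD' : IsMinimalResolution 𝒜 φ D' o' deg' I) :
    ∃ P : Matrix L J R, D' * P = P * D ∧ P.row o' = Pi.single o 1 ∧
      IsHomogeneousMatrix 𝒜 0 deg' deg P := by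
  classical
  let U : Matrix L J R := Matrix.single o' o 1
  have hDU : D' * U = 0 := by
    ext i j
    simp [U, Matrix.mul_apply, Matrix.single_apply, hD'.col_base, ite_and]
  obtain ⟨X, hX, hXo⟩ := hD'.exists_mul_eq hD.height_lt hD.sq (Z := U * D)
    (by rw [← Matrix.mul_assoc, hDU, Matrix.mul_assoc, hD.sq, Matrix.zero_mul, Matrix.mul_zero,
      add_zero])
    (fun j => by simpa [U] using hD.aug j)
  have hcomm : D' * (U + X) = (U + X) * D := by
    rw [Matrix.mul_add, hDU, zero_add, hX, Matrix.add_mul, add_comm]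
  refine ⟨homogeneousPart 𝒜 0 deg' deg (U + X), ?_, ?_, isHomogeneousMatrix_homogeneousPart _⟩
  · rw [← homogeneousPart_mul_left hD'.homogeneous, hcomm,
      homogeneousPart_mul_right hD.homogeneous]
  · have hproj : GradedRing.proj 𝒜 0 (1 : R) = 1 :=
      DirectSum.decompose_of_mem_same 𝒜 SetLike.GradedOne.one_mem
    ext j
    rcases eq_or_ne j o with rfl | hj
    · simpa [-GradedRing.proj_apply, homogeneousPart, U, hXo, hD.deg_base, hD'.deg_base]
        using hproj
    · simp [homogeneousPart, U, hXo, hj, hj.symm]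

theorem card_fiber_le [Nontrivial k] (hφ : ∀ g ≠ 0, ∀ x ∈ 𝒜 g, φ x = 0)
    (hD : IsMinimalResolution 𝒜 φ D o deg I) (hD' : IsMinimalResolution 𝒜 φ D' o' deg' I)
    (s : ℕ × G) : Fintype.card {j // deg j = s} ≤ Fintype.card {l // deg' l = s} := by
  classical
  obtain ⟨P, hP, hPo, hPhom⟩ := hD.exists_comparison hD'
  obtain ⟨Q, hQ, hQo, -⟩ := hD'.exists_comparison hD
  have hQP : φ.mapMatrix (Q * P) = 1 := by
    refine hD.map_eq_one_of_commute ?_ ?_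
    · rw [← Matrix.mul_assoc, hQ, Matrix.mul_assoc, hP, Matrix.mul_assoc]
    · ext j
      rw [Matrix.row_apply, Matrix.mul_apply_eq_vecMul, show Q o = Pi.single o' 1 from hQo,
        Matrix.single_one_vecMul, hPo]
  rw [RingHom.mapMatrix_apply, Matrix.map_mul] at hQP
  refine card_fiber_le_of_mul_eq_one hQP (fun l j hlj => ?_) s
  obtain ⟨hfst, hmem⟩ := hPhom l j fun h => hlj (by simp [h])
  have hsnd : (deg j).2 = (deg' l).2 := by
    by_contra h
    exact hlj (hφ _ (sub_ne_zero.mpr h) _ hmem)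
  exact Prod.ext hfst.symm hsnd.symm

theorem degrees_unique [Nontrivial k] (hφ : ∀ g ≠ 0, ∀ x ∈ 𝒜 g, φ x = 0)
    (hD : IsMinimalResolution 𝒜 φ D o deg I) (hD' : IsMinimalResolution 𝒜 φ D' o' deg' I) :
    Finset.univ.val.map deg = Finset.univ.val.map deg' := by
  ext s
  have h := (card_fiber_le hφ hD hD' s).antisymm (card_fiber_le hφ hD' hD s)
  simpa [Multiset.count_map, Fintype.card_subtype, eq_comm, Finset.card_def] using h

theorem tensor [DecidableEq J] [DecidableEq L] {S : Type*} [CommRing S] {I' : Ideal R}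
    (hD : IsMinimalResolution 𝒜 φ D o deg I) (hD' : IsMinimalResolution 𝒜 φ D' o' deg' I')
    {π : R →+* S} (hπ : Function.Surjective π) (hker : RingHom.ker π = I')
    (hDπ : ResolvesQuotient (D.map π) o (I.map π)) :
    IsMinimalResolution 𝒜 φ (tensorDifferential (fun j => (deg j).1) D D') (o, o')
      (fun j => deg j.1 + deg' j.2) (I ⊔ I') where
  toResolvesQuotient := hD.toResolvesQuotient.tensor hD'.toResolvesQuotient
    (fun i j hij => (hD.homogeneous i j hij).1) hπ hker hDπ
  deg_base := by rw [hD.deg_base, hD'.deg_base, add_zero]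
  homogeneous := (hD.homogeneous.kronecker .one).add
    ((IsHomogeneousMatrix.signMatrix _).kronecker hD'.homogeneous)
  minimal i j := by simp [tensorDifferential, hD.minimal, hD'.minimal]

end IsMinimalResolution

end Minimal

section TensorAlgebra

open Algebra.TensorProduct
open scoped TensorProduct

variable {K A₁ A₂ A : Type*} [Field K] [CommRing A₁] [CommRing A₂] [CommRing A] [Algebra K A₁]
  [Algebra K A₂] [Algebra K A] {ι₁ : A₁ →ₐ[K] A} {ι₂ : A₂ →ₐ[K] A}

lemma flat_left_of_bijective_productMap (h : Function.Bijective (productMap ι₁ ι₂)) :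
    (ι₁ : A₁ →+* A).Flat := by
  have hleft : (algebraMap A₁ (A₁ ⊗[K] A₂)).Flat := RingHom.flat_algebraMap_iff.mpr inferInstance
  have hcomp := hleft.comp
    (RingHom.Flat.of_bijective (f := (productMap ι₁ ι₂ : A₁ ⊗[K] A₂ →+* A)) h)
  convert hcomp using 1
  ext a
  simp

lemma bijective_productMap_comm (h : Function.Bijective (productMap ι₁ ι₂)) :
    Function.Bijective (productMap ι₂ ι₁) := by
  have hcomm : productMap ι₂ ι₁ =
      (productMap ι₁ ι₂).comp (Algebra.TensorProduct.comm K A₂ A₁).toAlgHom := by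
    ext <;> simp
  rw [hcomm]
  exact h.comp (Algebra.TensorProduct.comm K A₂ A₁).bijective

lemma exists_surjective_ker_eq_map (h : Function.Bijective (productMap ι₁ ι₂)) (I : Ideal A₂) :
    ∃ π : A →ₐ[K] A₁ ⊗[K] (A₂ ⧸ I), Function.Surjective π ∧ RingHom.ker π = I.map ι₂ ∧
      (π.comp ι₁ : A₁ →+* A₁ ⊗[K] (A₂ ⧸ I)).Flat := by
  let e := AlgEquiv.ofBijective _ h
  let q : A₁ ⊗[K] A₂ →ₐ[K] A₁ ⊗[K] (A₂ ⧸ I) := map (.id K A₁) (Ideal.Quotient.mkₐ K I)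
  have hq : Function.Surjective q := TensorProduct.map_surjective Function.surjective_id
    (Ideal.Quotient.mkₐ_surjective K I)
  have hqker : RingHom.ker q = I.map includeRight :=
    (lTensor_ker _ (Ideal.Quotient.mkₐ_surjective K I)).trans
      (congrArg _ (Ideal.Quotient.mkₐ_ker K I))
  have hπ : (q.comp e.symm).comp (productMap ι₁ ι₂) = q :=
    AlgHom.ext fun x => congrArg q (e.symm_apply_apply x)
  refine ⟨q.comp e.symm, hq.comp e.symm.surjective, ?_, ?_⟩
  · rw [← Ideal.map_comap_of_surjective (productMap ι₁ ι₂) h.surjective (RingHom.ker (q.comp _)),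
      AlgHom.comap_ker, hπ, hqker, Ideal.map_mapₐ, productMap_right]
  · have hleft : (algebraMap A₁ (A₁ ⊗[K] (A₂ ⧸ I))).Flat :=
      RingHom.flat_algebraMap_iff.mpr inferInstance
    convert hleft using 1
    have he₁ (a : A₁) : e.symm (ι₁ a) = a ⊗ₜ 1 := by simp [AlgEquiv.symm_apply_eq, e]
    ext a
    simp [he₁, q]

lemma ker_eq_map_ker_sup_map_ker {B : Type*} [CommRing B] [Algebra K B]
    (h : Function.Bijective (productMap ι₁ ι₂)) (f : A →ₐ[K] B)
    (hf : (f.comp ι₁).range.LinearDisjoint (f.comp ι₂).range) :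
    RingHom.ker f = (RingHom.ker (f.comp ι₁)).map ι₁ ⊔ (RingHom.ker (f.comp ι₂)).map ι₂ := by
  let f₁ := f.comp ι₁
  let f₂ := f.comp ι₂
  have hfac : f.comp (productMap ι₁ ι₂) =
      (f₁.range.mulMap f₂.range).comp (map f₁.rangeRestrict f₂.rangeRestrict) := by
    ext <;> simp [f₁, f₂]
  have hker : RingHom.ker ((f₁.range.mulMap f₂.range).comp
      (map f₁.rangeRestrict f₂.rangeRestrict)) =
      RingHom.ker (map f₁.rangeRestrict f₂.rangeRestrict) := by
    have hinj := Subalgebra.linearDisjoint_iff_injective.mp hf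
    rw [← AlgHom.comap_ker, (RingHom.injective_iff_ker_eq_bot _).mp hinj,
      RingHom.ker_eq_comap_bot]
  rw [← Ideal.map_comap_of_surjective (productMap ι₁ ι₂) h.surjective (RingHom.ker f),
    AlgHom.comap_ker, hfac, hker,
    map_ker _ _ f₁.rangeRestrict_surjective f₂.rangeRestrict_surjective, Ideal.map_sup,
    Ideal.map_mapₐ, Ideal.map_mapₐ, productMap_left, productMap_right, f₁.ker_rangeRestrict,
    f₂.ker_rangeRestrict]

theorem IsMinimalResolution.tensor_of_bijective_productMap {k G σ₁ σ₂ σ J L : Type*} [CommRing k]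
    [AddCommGroup G] [DecidableEq G] [SetLike σ₁ A₁] [SetLike σ₂ A₂] [SetLike σ A]
    [AddSubgroupClass σ A] [Fintype J] [DecidableEq J] [Fintype L] [DecidableEq L]
    {𝒜₁ : G → σ₁} {𝒜₂ : G → σ₂} {𝒜 : G → σ} [GradedRing 𝒜] {φ₁ : A₁ →+* k} {φ₂ : A₂ →+* k}
    {φ : A →+* k} {D₁ : Matrix J J A₁} {D₂ : Matrix L L A₂} {o₁ : J} {o₂ : L}
    {deg₁ : J → ℕ × G} {deg₂ : L → ℕ × G} {I₁ : Ideal A₁} {I₂ : Ideal A₂}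
    (hD₁ : IsMinimalResolution 𝒜₁ φ₁ D₁ o₁ deg₁ I₁)
    (hD₂ : IsMinimalResolution 𝒜₂ φ₂ D₂ o₂ deg₂ I₂)
    (h : Function.Bijective (productMap ι₁ ι₂))
    (hgr₁ : ∀ g, ∀ x ∈ 𝒜₁ g, ι₁ x ∈ 𝒜 g) (hgr₂ : ∀ g, ∀ x ∈ 𝒜₂ g, ι₂ x ∈ 𝒜 g)
    (hφ₁ : φ.comp ι₁ = φ₁) (hφ₂ : φ.comp ι₂ = φ₂) :
    IsMinimalResolution 𝒜 φ
      (tensorDifferential (fun j => (deg₁ j).1) (D₁.map ι₁) (D₂.map ι₂)) (o₁, o₂)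
      (fun j => deg₁ j.1 + deg₂ j.2) (I₁.map ι₁ ⊔ I₂.map ι₂) := by
  obtain ⟨π, hπ, hker, hflat⟩ := exists_surjective_ker_eq_map h I₂
  have hπ₁ := hD₁.toResolvesQuotient.map hflat
  refine (hD₁.map (flat_left_of_bijective_productMap h) hgr₁ hφ₁).tensor
    (hD₂.map (flat_left_of_bijective_productMap (bijective_productMap_comm h)) hgr₂ hφ₂)
    (π := (π : A →+* A₁ ⊗[K] (A₂ ⧸ I₂))) hπ hker ?_
  rwa [Matrix.map_map, Ideal.map_map]

end TensorAlgebra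

section ToricIdeal

open Algebra.TensorProduct

variable {K : Type*} [Field K] {n d : ℕ}

/-- The homomorphism `x_i ↦ t^{a_i}`, whose kernel is `toricIdeal K a`. -/
def toricMap (K : Type*) [Field K] (a : Fin n → Fin d → ℕ) :
    MvPolynomial (Fin n) K →ₐ[K] MvPolynomial (Fin d) K :=
  aeval fun i => monomial (Finsupp.equivFunOnFinite.symm (a i)) 1

lemma toricMap_monomial (a : Fin n → Fin d → ℕ) (e : Fin n →₀ ℕ) (c : K) :
    toricMap K a (monomial e c) = monomial (Finsupp.equivFunOnFinite.symm (gammaDeg a e)) c := by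
  have hdeg : ∑ i, e i • Finsupp.equivFunOnFinite.symm (a i) =
      Finsupp.equivFunOnFinite.symm (gammaDeg a e) := by
    ext j
    simp [gammaDeg, Finsupp.finsetSum_apply]
  rw [toricMap, aeval_monomial, Finsupp.prod_fintype _ _ fun _ => pow_zero _]
  simp only [monomial_pow, one_pow, ← monomial_sum_one, hdeg, MvPolynomial.algebraMap_eq,
    C_mul_monomial, mul_one]

lemma gammaDeg_mem_affSemigroup (a : Fin n → Fin d → ℕ) (e : Fin n →₀ ℕ) :
    gammaDeg a e ∈ affSemigroup a :=
  sum_mem fun i _ => nsmul_mem (AddSubmonoid.subset_closure (Set.mem_range_self i)) _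

lemma range_toricMap_le (K : Type*) [Field K] (a : Fin n → Fin d → ℕ) :
    Subalgebra.toSubmodule (toricMap K a).range ≤
      restrictSupport K ((⇑) ⁻¹' (affSemigroup a : Set (Fin d → ℕ))) := by
  rintro _ ⟨p, rfl⟩
  induction p using MvPolynomial.induction_on' with
  | monomial e c =>
    have hmem := gammaDeg_mem_affSemigroup a e
    simp [toricMap_monomial, hmem]
  | add p q hp hq => exact (map_add (toricMap K a).toRingHom p q).symm ▸ add_mem hp hq

lemma coe_basisRestrictSupport {σ R : Type*} [CommSemiring R] {s : Set (σ →₀ ℕ)} (v : s) :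
    (basisRestrictSupport R s v : MvPolynomial σ R) = monomial v 1 := by
  have h : basisRestrictSupport R s v =
      ⟨monomial v 1, (monomial_mem_restrictSupport R).mpr (.inl v.2)⟩ := by
    classical
    rw [Module.Basis.apply_eq_iff]
    ext w
    change coeff w.1 (monomial v.1 (1 : R)) = _
    simp [coeff_monomial, Finsupp.single_apply, Subtype.ext_iff]
  rw [h]

lemma linearDisjoint_restrictSupport {σ R : Type*} [CommRing R] {s t : Set (σ →₀ ℕ)}
    (h : Set.InjOn (fun v => v.1 + v.2) (s ×ˢ t)) :
    (restrictSupport R s).LinearDisjoint (restrictSupport R t) := by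
  refine Submodule.LinearDisjoint.of_basis_mul _ _ (basisRestrictSupport R s)
    (basisRestrictSupport R t) ?_
  have hinj : Function.Injective fun v : s × t => (v.1 + v.2 : σ →₀ ℕ) := fun v w hvw => by
    have := h (x₁ := (v.1, v.2)) (x₂ := (w.1, w.2)) ⟨v.1.2, v.2.2⟩ ⟨w.1.2, w.2.2⟩ hvw
    ext1 <;> ext1
    exacts [congrArg Prod.fst this, congrArg Prod.snd this]
  simpa [Function.comp_def, coe_basisRestrictSupport, monomial_mul] using
    (basisMonomials σ R).linearIndependent.comp _ hinj

lemma bijective_productMap_rename (K : Type*) [Field K] (m n : ℕ) :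
    Function.Bijective (productMap (rename (R := K) (Fin.castAdd n : Fin m → _))
      (rename (Fin.natAdd m))) := by
  have heq : productMap (rename (R := K) (Fin.castAdd n : Fin m → _)) (rename (Fin.natAdd m)) =
      ((tensorEquivSum K (Fin m) (Fin n) K).trans
        (renameEquiv K finSumFinEquiv)).toAlgHom := by
    ext <;> simp
  rw [heq]
  exact AlgEquiv.bijective _

variable {m : ℕ}

lemma toricMap_append_comp_rename_castAdd (K : Type*) [Field K] (a : Fin m → Fin d → ℕ)
    (b : Fin n → Fin d → ℕ) :
    (toricMap K (Fin.append a b)).comp (rename (Fin.castAdd n)) = toricMap K a := by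
  ext
  simp [toricMap]

lemma toricMap_append_comp_rename_natAdd (K : Type*) [Field K] (a : Fin m → Fin d → ℕ)
    (b : Fin n → Fin d → ℕ) :
    (toricMap K (Fin.append a b)).comp (rename (Fin.natAdd m)) = toricMap K b := by
  ext
  simp [toricMap]

theorem toricIdeal_append {a : Fin m → Fin d → ℕ} {b : Fin n → Fin d → ℕ}
    (h : Set.InjOn (fun v => v.1 + v.2)
      ((affSemigroup a : Set (Fin d → ℕ)) ×ˢ (affSemigroup b : Set (Fin d → ℕ)))) :
    toricIdeal K (Fin.append a b) =
      (toricIdeal K a).map (rename (Fin.castAdd n)) ⊔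
        (toricIdeal K b).map (rename (Fin.natAdd m)) := by
  have hsupp : Set.InjOn (fun v : (Fin d →₀ ℕ) × (Fin d →₀ ℕ) => v.1 + v.2)
      (((⇑) ⁻¹' (affSemigroup a : Set (Fin d → ℕ))) ×ˢ
        ((⇑) ⁻¹' (affSemigroup b : Set (Fin d → ℕ)))) := fun v hv w hw hvw => by
    have := h (x₁ := (⇑v.1, ⇑v.2)) (x₂ := (⇑w.1, ⇑w.2)) hv hw (congrArg (⇑) hvw)
    simpa [Prod.ext_iff] using this
  have hker := ker_eq_map_ker_sup_map_ker (bijective_productMap_rename K m n)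
    (toricMap K (Fin.append a b)) (by
      rw [toricMap_append_comp_rename_castAdd, toricMap_append_comp_rename_natAdd]
      exact (linearDisjoint_restrictSupport hsupp).of_le_of_flat_right (range_toricMap_le K a)
        (range_toricMap_le K b))
  rwa [toricMap_append_comp_rename_castAdd, toricMap_append_comp_rename_natAdd] at hker

end ToricIdeal

section Resolution

variable {K : Type*} [Field K] {n d : ℕ} {a : Fin n → Fin d → ℕ}

/-- Degrees in `ℕ^d`, viewed in the group `ℤ^d` so that matrix entries have a degree even where a
difference of generator degrees is not in `ℕ^d`. -/
def intDegree (d : ℕ) : (Fin d → ℕ) →+ (Fin d → ℤ) :=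
  (Nat.castAddMonoidHom ℤ).compLeft (Fin d)

lemma intDegree_injective (d : ℕ) : Function.Injective (intDegree d) :=
  fun _ _ h => funext fun j => Nat.cast_injective (congrFun h j)

/-- The grading of `K[x₁,…,x_n]` by `ℤ^d` in which `x_i` has degree `a_i`. -/
def toricGrading (K : Type*) [Field K] (a : Fin n → Fin d → ℕ) :
    (Fin d → ℤ) → Submodule K (MvPolynomial (Fin n) K) :=
  weightedHomogeneousSubmodule K fun i => intDegree d (a i)

instance (a : Fin n → Fin d → ℕ) : GradedRing (toricGrading K a) :=
  weightedGradedAlgebra K fun i => intDegree d (a i)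

lemma gammaDeg_eq_linearCombination (a : Fin n → Fin d → ℕ) (e : Fin n →₀ ℕ) :
    gammaDeg a e = Finsupp.linearCombination ℕ a e := by
  rw [Finsupp.linearCombination_apply, Finsupp.sum_fintype _ _ (by simp), gammaDeg]

lemma mem_toricGrading {g : Fin d → ℤ} {p : MvPolynomial (Fin n) K} :
    p ∈ toricGrading K a g ↔ ∀ e ∈ p.support, intDegree d (gammaDeg a e) = g := by
  have hweight (e : Fin n →₀ ℕ) : Finsupp.weight (fun i => intDegree d (a i)) e =
      intDegree d (gammaDeg a e) := by
    simp only [gammaDeg_eq_linearCombination, Finsupp.linearCombination_apply,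
      Finsupp.weight_apply, map_finsuppSum, map_nsmul]
  simp [toricGrading, mem_weightedHomogeneousSubmodule, IsWeightedHomogeneous, hweight]

lemma constantCoeff_eq_zero_of_mem_toricGrading {g : Fin d → ℤ} (hg : g ≠ 0)
    {p : MvPolynomial (Fin n) K} (hp : p ∈ toricGrading K a g) : constantCoeff p = 0 := by
  by_contra h
  refine hg ?_
  rw [← mem_toricGrading.mp hp 0 (mem_support_iff.mpr h)]
  simp [gammaDeg]

lemma rename_mem_toricGrading {m : ℕ} {b : Fin m → Fin d → ℕ} {f : Fin n → Fin m}
    (hf : ∀ i, b (f i) = a i) {g : Fin d → ℤ} {p : MvPolynomial (Fin n) K}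
    (hp : p ∈ toricGrading K a g) : rename f p ∈ toricGrading K b g := by
  rw [mem_toricGrading] at hp ⊢
  intro e he
  obtain ⟨u, rfl, hu⟩ := coeff_rename_ne_zero f p e (mem_support_iff.mp he)
  have hdeg : gammaDeg b (u.mapDomain f) = gammaDeg a u := by
    rw [gammaDeg_eq_linearCombination, Finsupp.linearCombination_mapDomain, funext (f := b ∘ f) hf,
      gammaDeg_eq_linearCombination]
  rw [hdeg, hp u (mem_support_iff.mpr hu)]

namespace MinFreeRes

variable (F : MinFreeRes K a)

/-- The generators of all the terms of a resolution, as a single index type. -/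
abbrev Idx : Type := Σ i : ℕ, Fin (F.β i)

instance : Finite F.Idx := by
  obtain ⟨N, hN⟩ := F.bdd
  have hlt (x : F.Idx) : x.1 < N := by
    by_contra! h
    exact (Fin.cast (hN x.1 h) x.2).elim0
  refine Finite.of_injective
    (fun x : F.Idx => (⟨⟨x.1, hlt x⟩, x.2⟩ : Σ i : Fin N, Fin (F.β i))) fun x y hxy => ?_
  obtain ⟨i, b⟩ := x
  obtain ⟨l, c⟩ := y
  obtain ⟨hil, hbc⟩ := Sigma.mk.inj hxy
  obtain rfl : i = l := congrArg Fin.val hil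
  exact congrArg (Sigma.mk i) (eq_of_heq hbc)

instance : Fintype F.Idx := Fintype.ofFinite _

/-- The homological degree and the `Γ`-degree of a generator. -/
def degree (j : F.Idx) : ℕ × (Fin d → ℤ) := (j.1, intDegree d (F.deg j.1 j.2))

/-- All differentials of a resolution as one square matrix, rows being indexed by targets. -/
def differential : Matrix F.Idx F.Idx (MvPolynomial (Fin n) K) :=
  Matrix.of fun k j => if hkj : j.1 = k.1 + 1 then
    F.mat k.1 (Fin.cast (congrArg F.β hkj) j.2) k.2 else 0

lemma differential_succ (i : ℕ) (b : Fin (F.β (i + 1))) (c : Fin (F.β i)) :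
    F.differential ⟨i, c⟩ ⟨i + 1, b⟩ = F.mat i b c := by
  simp [differential]

lemma differential_of_ne (k j : F.Idx) (hkj : j.1 ≠ k.1 + 1) : F.differential k j = 0 := by
  simp [differential, hkj]

lemma differential_mulVec (x : F.Idx → MvPolynomial (Fin n) K) (i : ℕ) (c : Fin (F.β i)) :
    F.differential.mulVec x ⟨i, c⟩ =
      (Matrix.of fun j' j => F.mat i j j').mulVecLin (fun b => x ⟨i + 1, b⟩) c := by
  refine (Fintype.sum_of_injective (fun b : Fin (F.β (i + 1)) => (⟨i + 1, b⟩ : F.Idx))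
    (sigma_mk_injective (β := fun i => Fin (F.β i))) _ _ ?_ fun b => ?_).symm
  · rintro ⟨l, b⟩ hl
    refine mul_eq_zero_of_left (F.differential_of_ne _ _ ?_) _
    rintro rfl
    exact hl ⟨b, rfl⟩
  · exact congrArg (· * x ⟨i + 1, b⟩) (F.differential_succ i b c).symm

/-- The generator in homological degree `0`. -/
def base : F.Idx := ⟨0, Fin.cast F.β0.symm 0⟩

lemma mem_ker_augmentation (x : F.Idx → MvPolynomial (Fin n) K) :
    (fun c => x ⟨0, c⟩) ∈ LinearMap.ker ((toricIdeal K a).mkQ ∘ₗ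
        (LinearMap.lsum (MvPolynomial (Fin n) K)
            (fun _ : Fin (F.β 0) => MvPolynomial (Fin n) K) ℕ)
          fun _ => LinearMap.id) ↔ x F.base ∈ toricIdeal K a := by
  have hsum : ∑ c : Fin (F.β 0), x ⟨0, c⟩ = x F.base := by
    have : Unique (Fin (F.β 0)) := F.β0 ▸ inferInstance
    rw [Fintype.sum_unique, base, Subsingleton.elim default]
  simp [LinearMap.lsum_apply, hsum, Ideal.Quotient.eq_zero_iff_mem]

lemma differential_sq : F.differential * F.differential = 0 := by
  have hzero (x : F.Idx → MvPolynomial (Fin n) K) :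
      F.differential.mulVec (F.differential.mulVec x) = 0 := by
    funext ⟨i, c⟩
    rw [differential_mulVec]
    have hmem : (fun b => F.differential.mulVec x ⟨i + 1, b⟩) ∈
        LinearMap.ker (Matrix.of fun j' j => F.mat i j j').mulVecLin := by
      rw [F.exact_succ i]
      exact ⟨fun b => x ⟨i + 1 + 1, b⟩, funext fun b => (F.differential_mulVec x (i + 1) b).symm⟩
    exact congrFun (LinearMap.mem_ker.mp hmem) c
  refine Matrix.ext_of_mulVec_single fun j => ?_
  rw [← Matrix.mulVec_mulVec, hzero, Matrix.zero_mulVec]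

lemma differential_base_mem (j : F.Idx) : F.differential F.base j ∈ toricIdeal K a := by
  have hcol : F.differential.mulVec (Pi.single j 1) F.base = F.differential F.base j := by
    rw [Matrix.mulVec_single_one]
    rfl
  rw [← hcol, ← mem_ker_augmentation, F.exact_zero]
  exact ⟨_, funext fun b => (F.differential_mulVec _ 0 b).symm⟩

lemma exists_differential_mulVec_eq {x : F.Idx → MvPolynomial (Fin n) K}
    (hx : F.differential.mulVec x = 0) (hxo : x F.base ∈ toricIdeal K a) :
    ∃ y, F.differential.mulVec y = x := by
  have hlift (i : ℕ) : ∃ y : Fin (F.β (i + 1)) → MvPolynomial (Fin n) K,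
      (Matrix.of fun j' j => F.mat i j j').mulVecLin y = fun c => x ⟨i, c⟩ := by
    rw [← LinearMap.mem_range]
    cases i with
    | zero => rwa [← F.exact_zero, mem_ker_augmentation]
    | succ i =>
      rw [← F.exact_succ i, LinearMap.mem_ker]
      funext c
      rw [← F.differential_mulVec, hx]
      rfl
  choose y hy using hlift
  refine ⟨fun
    | ⟨0, _⟩ => 0
    | ⟨i + 1, b⟩ => y i b, ?_⟩
  funext ⟨i, c⟩
  rw [differential_mulVec]
  exact congrFun (hy i) c

theorem isMinimalResolution : IsMinimalResolution (toricGrading K a) constantCoeff F.differential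
    F.base F.degree (toricIdeal K a) where
  sq := F.differential_sq
  col_base k := F.differential_of_ne k F.base (Nat.succ_ne_zero _).symm
  aug := F.differential_base_mem
  exact _ := F.exists_differential_mulVec_eq
  deg_base := by simp [degree, base, F.deg0]
  homogeneous k j hkj := by
    obtain ⟨i, c⟩ := k
    obtain ⟨l, b⟩ := j
    obtain rfl : l = i + 1 := by
      by_contra h
      exact hkj (F.differential_of_ne _ _ h)
    refine ⟨rfl, mem_toricGrading.mpr fun e he => ?_⟩
    rw [differential_succ] at he
    simp [degree, F.homog i b c e he]
  minimal k j := by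
    obtain ⟨i, c⟩ := k
    obtain ⟨l, b⟩ := j
    by_cases h : l = i + 1
    · subst h
      rw [differential_succ]
      exact F.minimal i b c
    · rw [differential_of_ne _ _ _ h, map_zero]

end MinFreeRes

end Resolution

section Degrees

variable {M : Type*}

/-- The internal degrees occurring in homological degree `i`. -/
def degreesAt (s : Multiset (ℕ × M)) (i : ℕ) : Multiset M :=
  (s.filter (·.1 = i)).map Prod.snd

lemma degreesAt_cons (x : ℕ × M) (s : Multiset (ℕ × M)) (i : ℕ) :
    degreesAt (x ::ₘ s) i = (if x.1 = i then {x.2} else 0) + degreesAt s i := by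
  split_ifs with h <;> simp [degreesAt, h, Multiset.singleton_add]

lemma degreesAt_add (s t : Multiset (ℕ × M)) (i : ℕ) :
    degreesAt (s + t) i = degreesAt s i + degreesAt t i := by
  simp [degreesAt]

lemma degreesAt_map_add [Add M] (x : ℕ × M) (t : Multiset (ℕ × M)) (i : ℕ) :
    degreesAt (t.map (x + ·)) i =
      if x.1 ≤ i then (degreesAt t (i - x.1)).map (x.2 + ·) else 0 := by
  split_ifs with h
  · have hiff (y : ℕ × M) : x.1 + y.1 = i ↔ y.1 = i - x.1 := by lia
    simp [degreesAt, Multiset.filter_map, hiff]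
  · have hne (y : ℕ × M) : x.1 + y.1 ≠ i := by lia
    simp [degreesAt, Multiset.filter_map, hne]

lemma degreesAt_bind_add [Add M] (s t : Multiset (ℕ × M)) (i : ℕ) :
    degreesAt (s.bind fun x => t.map (x + ·)) i =
      ∑ p ∈ Finset.range (i + 1),
        (degreesAt s p).bind fun v => (degreesAt t (i - p)).map (v + ·) := by
  induction s using Multiset.induction with
  | empty => simp [degreesAt]
  | cons x s ih =>
    have hx (p : ℕ) : (if x.1 = p then {x.2} else 0 : Multiset M).bind
        (fun v => (degreesAt t (i - p)).map (v + ·)) =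
        if x.1 = p then (degreesAt t (i - p)).map (x.2 + ·) else 0 := by
      split_ifs <;> simp
    simp only [Multiset.cons_bind, degreesAt_add, ih, degreesAt_map_add, degreesAt_cons,
      Multiset.add_bind, Finset.sum_add_distrib, hx, Finset.sum_ite_eq, Finset.mem_range,
      Nat.lt_succ_iff]

lemma map_univ_prod_add [Add M] {J L : Type*} [Fintype J] [Fintype L] (f : J → M) (g : L → M) :
    Finset.univ.val.map (fun j : J × L => f j.1 + g j.2) =
      (Finset.univ.val.map f).bind fun x => (Finset.univ.val.map g).map (x + ·) := by
  rw [← Finset.univ_product_univ, Finset.product_val]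
  simp [SProd.sprod, Multiset.product, Multiset.map_bind, Multiset.bind_map]

lemma MinFreeRes.degreesAt_degree {K : Type*} [Field K] {n d : ℕ} {a : Fin n → Fin d → ℕ}
    (F : MinFreeRes K a) (i : ℕ) :
    degreesAt (Finset.univ.val.map F.degree) i = (F.Betti i).map (intDegree d) := by
  have hfiber : Finset.univ.filter (fun j : F.Idx => j.1 = i) =
      Finset.univ.map ⟨Sigma.mk i, sigma_mk_injective⟩ := by
    ext ⟨l, b⟩
    simp only [Finset.mem_filter, Finset.mem_univ, true_and, Finset.mem_map,
      Function.Embedding.coeFn_mk]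
    constructor
    · rintro rfl
      exact ⟨b, rfl⟩
    · rintro ⟨c, hc⟩
      exact (congrArg Sigma.fst hc).symm
  have hval := congrArg (fun s : Finset F.Idx => s.val.map fun j => (F.degree j).2) hfiber
  simp only [Finset.filter_val, Finset.map_val, Multiset.map_map] at hval
  simp only [degreesAt, Multiset.filter_map, Multiset.map_map, Betti]
  exact hval

end Degrees

section Join

lemma injOn_add_of_linearIndependent {d : ℕ} {I J : Type*}
    {S T : Set (Fin d → ℕ)} {e : I → Fin d → ℚ} {f : J → Fin d → ℚ}
    (hindep : LinearIndependent ℚ (Sum.elim e f))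
    (hS : ∀ v ∈ S, (Nat.cast ∘ v) ∈ Submodule.span ℚ (Set.range e))
    (hT : ∀ w ∈ T, (Nat.cast ∘ w) ∈ Submodule.span ℚ (Set.range f)) :
    Set.InjOn (fun v => v.1 + v.2) (S ×ˢ T) := by
  have hdisj := (linearIndependent_sum.mp hindep).2.2
  have hcast : Function.Injective fun v : Fin d → ℕ => (Nat.cast ∘ v : Fin d → ℚ) :=
    Nat.cast_injective.comp_left
  rintro ⟨v, w⟩ ⟨hv, hw⟩ ⟨v', w'⟩ ⟨hv', hw'⟩ h
  have hsub : (Nat.cast ∘ v - Nat.cast ∘ v' : Fin d → ℚ) = Nat.cast ∘ w' - Nat.cast ∘ w := by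
    ext j
    have hj : (v j + w j : ℚ) = v' j + w' j := mod_cast congrFun h j
    simp only [Pi.sub_apply, Function.comp_apply]
    linarith
  have hzero := Submodule.disjoint_def.mp hdisj _ (sub_mem (hS v hv) (hS v' hv'))
    (hsub ▸ sub_mem (hT w' hw') (hT w hw))
  exact Prod.ext (hcast (sub_eq_zero.mp hzero)) (hcast (sub_eq_zero.mp (hsub ▸ hzero))).symm

lemma mem_span_range_of_eq_sum {I J : Type*} [Fintype I] {e : I → J → ℚ} {c : I → ℚ}
    {v : J → ℚ} (h : ∀ j, v j = ∑ t, c t * e t j) : v ∈ Submodule.span ℚ (Set.range e) :=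
  Submodule.mem_span_range_iff_exists_fun ℚ |>.mpr ⟨c, funext fun j => by simp [h]⟩

variable {K : Type*} [Field K] {m n d : ℕ} {a : Fin m → Fin d → ℕ} {b : Fin n → Fin d → ℕ}

theorem MinFreeRes.isMinimalResolution_append
    (h : Set.InjOn (fun v => v.1 + v.2)
      ((affSemigroup a : Set (Fin d → ℕ)) ×ˢ (affSemigroup b : Set (Fin d → ℕ))))
    (F₁ : MinFreeRes K a) (F₂ : MinFreeRes K b) :
    IsMinimalResolution (toricGrading K (Fin.append a b)) constantCoeff
      (tensorDifferential (fun j => (F₁.degree j).1)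
        (F₁.differential.map (rename (Fin.castAdd n)))
        (F₂.differential.map (rename (Fin.natAdd m))))
      (F₁.base, F₂.base) (fun j => F₁.degree j.1 + F₂.degree j.2)
      (toricIdeal K (Fin.append a b)) := by
  rw [toricIdeal_append h]
  exact F₁.isMinimalResolution.tensor_of_bijective_productMap F₂.isMinimalResolution
    (bijective_productMap_rename K m n)
    (fun _ _ => rename_mem_toricGrading (Fin.append_left a b))
    (fun _ _ => rename_mem_toricGrading (Fin.append_right a b))
    (RingHom.ext (constantCoeff_rename _)) (RingHom.ext (constantCoeff_rename _))

theorem betti_degrees_of_join_general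
    (h : Set.InjOn (fun v => v.1 + v.2)
      ((affSemigroup a : Set (Fin d → ℕ)) ×ˢ (affSemigroup b : Set (Fin d → ℕ))))
    (F : MinFreeRes K (Fin.append a b)) (F₁ : MinFreeRes K a) (F₂ : MinFreeRes K b) (i : ℕ) :
    F.Betti i = ∑ p ∈ Finset.range (i + 1),
      (F₁.Betti p).bind fun v => (F₂.Betti (i - p)).map fun w => v + w := by
  have hdeg := F.isMinimalResolution.degrees_unique
    (fun _ hg _ => constantCoeff_eq_zero_of_mem_toricGrading hg)
    (F₁.isMinimalResolution_append h F₂)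
  apply Multiset.map_injective (intDegree_injective d)
  rw [← F.degreesAt_degree, hdeg, map_univ_prod_add, degreesAt_bind_add,
    ← Multiset.coe_mapAddMonoidHom (intDegree d), map_sum]
  simp [F₁.degreesAt_degree, F₂.degreesAt_degree, Multiset.map_bind, Multiset.bind_map]

end Join

theorem betti_degrees_of_join
    {K : Type*} [Field K] {r r₁ n₁ r₂ n₂ : ℕ}
    (g₁ : Fin (r₁ + n₁) → Fin r → ℕ) (g₂ : Fin (r₂ + n₂) → Fin r → ℕ)
    -- `Γ₁`, `Γ₂` are minimally generated by `𝒢₁`, `𝒢₂`: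
    (hmin₁ : ∀ i, g₁ i ∉ AddSubmonoid.closure (Set.range g₁ \ {g₁ i}))
    (hmin₂ : ∀ i, g₂ i ∉ AddSubmonoid.closure (Set.range g₂ \ {g₂ i}))
    -- the generating sets are disjoint:
    (hdisj : Disjoint (Set.range g₁) (Set.range g₂))
    -- the first `r₁` (resp. `r₂`) generators are the extremal rays: every element of
    -- `Γ₁` (resp. `Γ₂`) is a non-negative rational combination of them:
    (hray₁ : ∀ v ∈ affSemigroup g₁, ∃ c : Fin r₁ → ℚ, (∀ t, 0 ≤ c t) ∧
      ∀ j, (v j : ℚ) = ∑ t, c t * (g₁ (Fin.castAdd n₁ t) j : ℚ))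
    (hray₂ : ∀ v ∈ affSemigroup g₂, ∃ c : Fin r₂ → ℚ, (∀ t, 0 ≤ c t) ∧
      ∀ j, (v j : ℚ) = ∑ t, c t * (g₂ (Fin.castAdd n₂ t) j : ℚ))
    -- `E_{Γ₁} ∪ E_{Γ₂}` is linearly independent over `ℚ`:
    (hindep : LinearIndependent ℚ
      (Sum.elim (fun t : Fin r₁ => fun j => (g₁ (Fin.castAdd n₁ t) j : ℚ))
        (fun t : Fin r₂ => fun j => (g₂ (Fin.castAdd n₂ t) j : ℚ)))) :
    -- then for minimal graded free resolutions `F` of `K[Γ₁ ⊔ Γ₂]`, `F₁` of `K[Γ₁]`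
    -- and `F₂` of `K[Γ₂]`:  `ℬᵢ(Γ) = ⋃_{p₁+p₂=i} (ℬ_{p₁}(Γ₁) + ℬ_{p₂}(Γ₂))`
    -- (a multiset union of multisets of pairwise sums):
    ∀ (F : MinFreeRes K (Fin.append g₁ g₂)) (F₁ : MinFreeRes K g₁)
      (F₂ : MinFreeRes K g₂) (i : ℕ),
      F.Betti i =
        ∑ p ∈ Finset.range (i + 1),
          (F₁.Betti p).bind fun v => (F₂.Betti (i - p)).map fun w => v + w :=
  betti_degrees_of_join_general (injOn_add_of_linearIndependent hindep
    (fun v hv => (hray₁ v hv).elim fun _ hc => mem_span_range_of_eq_sum hc.2)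
    (fun v hv => (hray₂ v hv).elim fun _ hc => mem_span_range_of_eq_sum hc.2))
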